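/- Let I, J be disjoint finite sets. If a (not necessarily even) state ω on A(I∪J) is separable for the CAR pair (A(I), A(J)), then ω is separable for the tensor product pair (A(I), A(I)'), where A(I)' is the commutant of A(I) in A(I∪J). -/

import Mathlib

/-! The algebra `A(I ∪ J)` contains a self-adjoint unitary `v ∈ A(I)` (the parity of the modes in
`I`) which anticommutes with the generators of `A(I)` and commutes with `A(J)`. Removing one mode
at a time, the commutant `A(I)'` is seen to be generated by the twisted modes `v a_j`, `j ∈ J`
(`exists_parity`). Consequently each `z ∈ A(I)'` has the form `p + v q` with `p` and `q` in `A(J)`,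
respectively even and odd (`exists_even_odd`). Both gradings are expressed through `v`: an
element of `A(J)` is odd when `v` times it lies in the commutant of `A(I)`, and an element of
`A(I)` is odd when it anticommutes with `v`.

It suffices to decompose a state `φ` that is a product for `(A(I), A(J))`. Odd elements
of `A(I)` and of `A(J)` anticommute, and comparing `φ (x y)` with the conjugate of
`φ (star x * star y)` shows `φ x * φ y = 0` for such `x`, `y`: the restriction of `φ` to one of the
two algebras is even (`odd_mul_odd_eq_zero`).

* If `φ` is even on `A(J)`, then `φ (x (p + v q)) = φ x * φ p`, and `φ` is already a product for
  `(A(I), A(I)')`.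
* If `φ` is even on `A(I)`, compress it with the spectral projections `P₊ = (1 + v) / 2` and
  `P₋ = (1 - v) / 2`. They commute with `A(I)'` and `P_± (p + v q) = P_± (p ± q)`, so
  `φ (P_± x z P_±) = φ (P_± x P_±) * φ (p ± q)`: both compressions are products for
  `(A(I), A(I)')`. They add up to `φ` on `A(I) A(I)'`, because the off-diagonal part of `x` is odd. -/

open scoped ComplexOrder

/-- The canonical anticommutation relations for a family of annihilation operators. -/
def IsCAR {A : Type*} [Ring A] [StarRing A] {ι : Type*} [DecidableEq ι] (a : ι → A) : Prop :=
  (∀ i j, star (a i) * a j + a j * star (a i) = if i = j then (1 : A) else 0) ∧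
  (∀ i j, star (a i) * star (a j) + star (a j) * star (a i) = 0) ∧
  (∀ i j, a i * a j + a j * a i = 0)

/-- A state: a normalized positive linear functional. -/
def IsState {A : Type*} [Ring A] [StarRing A] [Algebra ℂ A] (φ : A → ℂ) : Prop :=
  (∀ x y, φ (x + y) = φ x + φ y) ∧ (∀ (c : ℂ) (x : A), φ (c • x) = c * φ x) ∧
  φ 1 = 1 ∧ ∀ x, 0 ≤ φ (star x * x)

/-- Separability of a state `ω` for a pair of subsets `S`, `T` of the algebra: `ω` agrees on
products with a convex combination of product states. -/
def IsSeparableState {A : Type*} [Ring A] [StarRing A] [Algebra ℂ A]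
    (ω : A → ℂ) (S T : Set A) : Prop :=
  ∃ (n : ℕ) (lam : Fin n → ℝ) (φ : Fin n → (A → ℂ)),
    (∀ i, 0 < lam i) ∧ (∑ i, lam i = 1) ∧
    (∀ i, IsState (φ i)) ∧
    (∀ i, ∀ x ∈ S, ∀ y ∈ T, φ i (x * y) = φ i x * φ i y) ∧
    (∀ x ∈ S, ∀ y ∈ T, ω (x * y) = ∑ i, (lam i : ℂ) * φ i (x * y))

/-! ### Positive functionals -/

section States

variable {A : Type*} [Ring A] [StarRing A] [Algebra ℂ A]

lemma IsState.map_add {φ : A → ℂ} (h : IsState φ) (x y : A) : φ (x + y) = φ x + φ y := h.1 x y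

lemma IsState.map_smul {φ : A → ℂ} (h : IsState φ) (c : ℂ) (x : A) : φ (c • x) = c * φ x :=
  h.2.1 c x

lemma IsState.map_one {φ : A → ℂ} (h : IsState φ) : φ 1 = 1 := h.2.2.1

lemma IsState.nonneg {φ : A → ℂ} (h : IsState φ) (x : A) : 0 ≤ φ (star x * x) := h.2.2.2 x

lemma IsState.map_neg {φ : A → ℂ} (h : IsState φ) (x : A) : φ (-x) = -φ x := by
  have := h.map_smul (-1) x
  simpa using this

lemma IsState.map_sub {φ : A → ℂ} (h : IsState φ) (x y : A) : φ (x - y) = φ x - φ y := by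
  rw [sub_eq_add_neg, h.map_add, h.map_neg, sub_eq_add_neg]

/-- A state compressed by a projection of positive weight is again a state. -/
lemma IsState.compress {φ : A → ℂ} (h : IsState φ) {P : A} (hs : star P = P) (hP : P * P = P)
    (hpos : 0 < φ P) : IsState fun z => φ (P * z * P) / φ P := by
  refine ⟨fun x y => ?_, fun c x => ?_, ?_, fun x => ?_⟩
  · simp only [mul_add, add_mul, h.map_add, add_div]
  · simp only [mul_smul_comm, smul_mul_assoc, h.map_smul, mul_div_assoc]
  · simp only [mul_one, hP]
    exact div_self hpos.ne'
  · have e : P * (star x * x) * P = star (x * P) * (x * P) := by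
      rw [star_mul, hs]; noncomm_ring
    simp only [e]
    exact div_nonneg (h.nonneg _) hpos.le

variable [StarModule ℂ A]

/-- Positivity on `1 + x` and on `1 + i x` gives the imaginary and the real part. -/
lemma IsState.map_star {φ : A → ℂ} (h : IsState φ) (x : A) : φ (star x) = star (φ x) := by
  have e1 : star (1 + x) * (1 + x) = 1 + x + star x + star x * x := by
    simp only [star_add, star_one]; noncomm_ring
  have e2 : star (1 + Complex.I • x) * (1 + Complex.I • x)
      = 1 + Complex.I • x + (-Complex.I) • star x + star x * x := by
    have hI : Complex.I * -Complex.I = 1 := by simp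
    simp only [star_add, star_one, star_smul, Complex.star_def, Complex.conj_I, mul_add, add_mul,
      one_mul, mul_one, smul_mul_assoc, mul_smul_comm, smul_smul, smul_add, hI,
      one_smul]
    abel
  have h1 := h.nonneg (1 + x)
  have h2 := h.nonneg (1 + Complex.I • x)
  have h3 := h.nonneg x
  rw [e1] at h1
  rw [e2] at h2
  simp only [h.map_add, h.map_smul, h.map_one, Complex.le_def, Complex.add_im, Complex.add_re,
    Complex.mul_re, Complex.mul_im, Complex.neg_re, Complex.neg_im, Complex.I_re, Complex.I_im,
    Complex.one_im, Complex.one_re, Complex.zero_im, Complex.zero_re] at h1 h2 h3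
  apply Complex.ext
  · simp only [Complex.star_def, Complex.conj_re]; linarith [h2.2, h3.2]
  · simp only [Complex.star_def, Complex.conj_im]; linarith [h1.2, h3.2]

/-- The degenerate case of the Cauchy-Schwarz inequality. -/
lemma IsState.mul_eq_zero {φ : A → ℂ} (h : IsState φ) {p : A} (hp : φ (star p * p) = 0) (w : A) :
    φ (w * p) = 0 := by
  set c := φ (w * p) with hc
  have hc' : φ (star p * star w) = star c := by rw [← star_mul, h.map_star]
  have key : ∀ r : ℝ, 0 ≤ (φ (w * star w)).re - 2 * r * Complex.normSq c := by
    intro r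
    have h1 := h.nonneg (star w + (-(r : ℂ) * star c) • p)
    have e : star (star w + (-(r : ℂ) * star c) • p) * (star w + (-(r : ℂ) * star c) • p)
        = w * star w + (-(r : ℂ) * star c) • (w * p) + (-(r : ℂ) * c) • (star p * star w)
          + ((-(r : ℂ) * c) * (-(r : ℂ) * star c)) • (star p * p) := by
      have : star (-(r : ℂ) * star c) = -(r : ℂ) * c := by
        simp [mul_comm]
      simp only [star_add, star_star, star_smul, this, add_mul, mul_add, smul_mul_assoc,
        mul_smul_comm, smul_smul, smul_add, mul_comm (-(r : ℂ) * c)]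
      abel
    rw [e] at h1
    simp only [h.map_add, h.map_smul, hp, hc', ← hc] at h1
    have := h1.1
    simp only [Complex.star_def, Complex.add_re, Complex.mul_re, Complex.neg_re, Complex.neg_im,
      Complex.ofReal_re, Complex.ofReal_im, Complex.conj_re, Complex.conj_im, Complex.mul_im,
      Complex.zero_re, Complex.zero_im] at this
    rw [Complex.normSq_apply]
    linarith
  by_contra hne
  have hpos : 0 < Complex.normSq c := Complex.normSq_pos.2 hne
  have := key (((φ (w * star w)).re + 1) / (2 * Complex.normSq c))
  have e : 2 * (((φ (w * star w)).re + 1) / (2 * Complex.normSq c)) * Complex.normSq c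
      = (φ (w * star w)).re + 1 := by field_simp
  linarith

end States

/-- In a finite decomposition the weights may be allowed to vanish, with no condition imposed on
the functionals of weight zero. -/
lemma isSeparableState_of_fintype {A : Type*} [Ring A] [StarRing A] [Algebra ℂ A]
    {ω : A → ℂ} {S T : Set A} {κ : Type*} [Fintype κ] (lam : κ → ℝ) (φ : κ → A → ℂ)
    (h0 : ∀ k, 0 ≤ lam k) (h1 : ∑ k, lam k = 1)
    (hφ : ∀ k, 0 < lam k → IsState (φ k) ∧ ∀ x ∈ S, ∀ y ∈ T, φ k (x * y) = φ k x * φ k y)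
    (hω : ∀ x ∈ S, ∀ y ∈ T, ω (x * y) = ∑ k, (lam k : ℂ) * φ k (x * y)) :
    IsSeparableState ω S T := by
  classical
  let e := Fintype.equivFin {k : κ // 0 < lam k}
  have sum_eq : ∀ {M : Type} [AddCommMonoid M] (f : κ → M), (∀ k, lam k = 0 → f k = 0) →
      ∑ i, f (e.symm i).1 = ∑ k, f k := by
    intro M _ f hf
    rw [Equiv.sum_comp e.symm (fun k : {k : κ // 0 < lam k} => f k.1),
      ← Finset.sum_subtype (Finset.univ.filter fun k => 0 < lam k) (by simp) f]
    refine Finset.sum_filter_of_ne fun k _ hk => (h0 k).lt_of_ne fun h => hk (hf k h.symm)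
  refine ⟨_, fun i => lam (e.symm i).1, fun i => φ (e.symm i).1, fun i => (e.symm i).2, ?_,
    fun i => (hφ _ (e.symm i).2).1, fun i => (hφ _ (e.symm i).2).2, fun x hx y hy => ?_⟩
  · rw [sum_eq lam fun k hk => hk, h1]
  · rw [hω x hx y hy, sum_eq (fun k => (lam k : ℂ) * φ k (x * y)) fun k hk => by simp [hk]]

/-! ### Decomposition of a product state -/

section Product

variable {A : Type*} [Ring A] [StarRing A] [Algebra ℂ A] [StarModule ℂ A]
  {S T : StarSubalgebra ℂ A} {v : A} {φ : A → ℂ}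

/-- A product state annihilates the odd part of at least one of the two algebras. -/
lemma odd_mul_odd_eq_zero (h : IsState φ) (hv : v * v = 1)
    (hprod : ∀ x ∈ S, ∀ y ∈ T, φ (x * y) = φ x * φ y)
    {x y : A} (hx : x ∈ S) (hxv : x * v = -(v * x)) (hy : y ∈ T)
    (hyv : v * y ∈ Set.centralizer (S : Set A)) : φ x * φ y = 0 := by
  have hanti : x * y = -(y * x) := by
    have h1 : x * (v * y) = v * y * x := hyv x hx
    calc x * y = v * v * (x * y) := by rw [hv, one_mul]
      _ = -(v * (-(v * x) * y)) := by noncomm_ring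
      _ = -(v * (x * (v * y))) := by rw [← hxv]; noncomm_ring
      _ = -(v * v * (y * x)) := by rw [h1]; noncomm_ring
      _ = -(y * x) := by rw [hv, one_mul]
  have h1 : φ (y * x) = φ x * φ y := by
    have : y * x = star (star x * star y) := by simp
    rw [this, h.map_star, hprod _ (star_mem hx) _ (star_mem hy), h.map_star, h.map_star]
    simp
  have h2 := hprod x hx y hy
  rw [hanti, h.map_neg, h1] at h2
  linear_combination (-1 / 2 : ℂ) * h2

/-- A product state for `(S, T)` is a convex combination of two functionals which, when their
weight is positive, are product states for `S` and its commutant. -/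
lemma product_state_decomposition (h : IsState φ) (hvS : v ∈ S) (hsv : star v = v)
    (hv : v * v = 1)
    (hdec : ∀ z ∈ Set.centralizer (S : Set A), ∃ p ∈ T, ∃ q ∈ T,
      v * q ∈ Set.centralizer (S : Set A) ∧ z = p + v * q)
    (hprod : ∀ x ∈ S, ∀ y ∈ T, φ (x * y) = φ x * φ y) :
    ∃ (q : Bool → ℝ) (ψ : Bool → A → ℂ), (∀ b, 0 ≤ q b) ∧ ∑ b, q b = 1 ∧
      (∀ b, 0 < q b → IsState (ψ b) ∧ ∀ x ∈ (S : Set A), ∀ y ∈ Set.centralizer (S : Set A),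
        ψ b (x * y) = ψ b x * ψ b y) ∧
      ∀ x ∈ (S : Set A), ∀ y ∈ Set.centralizer (S : Set A),
        φ (x * y) = ∑ b, (q b : ℂ) * ψ b (x * y) := by
  by_cases hcase : ∀ y ∈ T, v * y ∈ Set.centralizer (S : Set A) → φ y = 0
  · refine ⟨fun b => if b then 1 else 0, fun _ => φ, fun b => by cases b <;> simp, by simp,
      fun b _ => ⟨h, ?_⟩, fun x _ y _ => by simp⟩
    have key : ∀ x ∈ S, ∀ p ∈ T, ∀ q ∈ T, v * q ∈ Set.centralizer (S : Set A) →
        φ (x * (p + v * q)) = φ x * φ p := by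
      intro x hx p hp q hq hvq
      rw [mul_add, ← mul_assoc, h.map_add, hprod x hx p hp, hprod _ (mul_mem hx hvS) q hq,
        hcase q hq hvq, mul_zero, add_zero]
    intro x hx z hz
    obtain ⟨p, hp, q, hq, hvq, rfl⟩ := hdec z hz
    have h1 := key 1 (one_mem S) p hp q hq hvq
    rw [one_mul, h.map_one, one_mul] at h1
    change φ (x * (p + v * q)) = φ x * φ (p + v * q)
    rw [key x hx p hp q hq hvq, h1]
  · push Not at hcase
    obtain ⟨y₀, hy₀, hvy₀, hne⟩ := hcase
    have heven : ∀ x ∈ S, x * v = -(v * x) → φ x = 0 := fun x hx hxv =>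
      (mul_eq_zero.1 (odd_mul_odd_eq_zero h hv hprod hx hxv hy₀ hvy₀)).resolve_right hne
    let s : Bool → ℂ := fun b => if b then 1 else -1
    have hs : ∀ b, s b * s b = 1 := fun b => by cases b <;> simp [s]
    have hss : ∀ b, star (s b) = s b := fun b => by cases b <;> simp [s]
    let P : Bool → A := fun b => (1 / 2 : ℂ) • (1 + s b • v)
    have hPS : ∀ b, P b ∈ S := fun b =>
      S.smul_mem (add_mem (one_mem S) (S.smul_mem hvS _)) _
    have hPstar : ∀ b, star (P b) = P b := fun b => by
      have : star (1 / 2 : ℂ) = 1 / 2 := by simp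
      simp only [P, star_smul, star_add, star_one, hss, hsv, this]
    have hPv : ∀ b, P b * v = s b • P b := fun b => by
      simp only [P, smul_mul_assoc, add_mul, one_mul, hv, smul_add, smul_smul, smul_comm (s b),
        hs, mul_assoc, mul_one]
      abel
    have hPP : ∀ b, P b * P b = P b := fun b => by
      have : P b * P b = (1 / 2 : ℂ) • (P b + s b • (P b * v)) := by
        conv_lhs => enter [2]; simp only [P]
        simp only [mul_smul_comm, mul_add, mul_one]
      rw [this, hPv, smul_smul, hs, one_smul, ← two_smul ℂ (P b), smul_smul]
      norm_num
    have hPnonneg : ∀ b, 0 ≤ φ (P b) := fun b => by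
      have := h.nonneg (P b)
      rwa [hPstar, hPP] at this
    have hPre : ∀ b, (((φ (P b)).re : ℝ) : ℂ) = φ (P b) := fun b =>
      (Complex.eq_re_of_ofReal_le (hPnonneg b)).symm
    -- The two diagonal blocks add up to the average of `w` and `v w v`.
    have hblocks : ∀ w : A, φ w - (φ (P true * w * P true) + φ (P false * w * P false))
        = (1 / 2 : ℂ) * φ (w - v * w * v) := by
      intro w
      have : P true * w * P true + P false * w * P false
          = (1 / 2 : ℂ) • w + (1 / 2 : ℂ) • (v * w * v) := by
        simp only [P, s, if_true, Bool.false_eq_true, if_false, one_smul, neg_smul,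
          smul_mul_assoc, mul_smul_comm, smul_smul, ← smul_add]
        rw [show (1 + v) * w * (1 + v) + (1 + -v) * w * (1 + -v) = (2 : ℂ) • (w + v * w * v) by
          rw [two_smul]; noncomm_ring, smul_smul]
        norm_num
      rw [← h.map_add, this, h.map_add, h.map_smul, h.map_smul, h.map_sub]
      ring
    clear_value P s
    -- A compressed functional is evaluated on `P x P * (p + s q)`, an element of `S * T`.
    have key : ∀ b, ∀ x ∈ S, ∀ p ∈ T, ∀ q ∈ T, p + v * q ∈ Set.centralizer (S : Set A) →
        φ (P b * (x * (p + v * q)) * P b) = φ (P b * x * P b) * φ (p + s b • q) := by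
      intro b x hx p hp q hq hz
      have hc : P b * (p + v * q) = (p + v * q) * P b := hz (P b) (hPS b)
      have e : P b * (x * (p + v * q)) * P b = P b * x * P b * (p + s b • q) := by
        calc P b * (x * (p + v * q)) * P b = P b * x * ((p + v * q) * P b) := by noncomm_ring
          _ = P b * x * (P b * p + P b * v * q) := by rw [← hc]; noncomm_ring
          _ = P b * x * (P b * (p + s b • q)) := by
            rw [hPv, smul_mul_assoc, mul_add (P b), mul_smul_comm]
          _ = _ := by noncomm_ring
      rw [e]
      exact hprod _ (mul_mem (mul_mem (hPS b) hx) (hPS b)) _ (add_mem hp (T.smul_mem hq _))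
    refine ⟨fun b => (φ (P b)).re, fun b z => φ (P b * z * P b) / φ (P b),
      fun b => (hPnonneg b).1, ?_, fun b hb => ?_, fun x hx z hz => ?_⟩
    · have h1 := hblocks 1
      rw [mul_one, mul_one, mul_one, hPP, hPP, hv, sub_self, h.map_one] at h1
      have h0 : φ 0 = 0 := by simpa using h.map_smul 0 0
      rw [h0, mul_zero] at h1
      have h2 := congrArg Complex.re (sub_eq_zero.1 h1)
      simpa using h2.symm
    · have hne : φ (P b) ≠ 0 := fun h0 => by simp [h0] at hb
      refine ⟨h.compress (hPstar b) (hPP b) ((hPnonneg b).lt_of_ne hne.symm),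
        fun x hx z hz => ?_⟩
      obtain ⟨p, hp, q, hq, hvq, rfl⟩ := hdec z hz
      have h1 := key b 1 (one_mem S) p hp q hq hz
      rw [one_mul, mul_one, hPP] at h1
      simp only [key b x hx p hp q hq hz, h1]
      field_simp
    · -- Where the weight vanishes, so does the whole compressed functional.
      have hterm : ∀ b, (((φ (P b)).re : ℝ) : ℂ) * (φ (P b * (x * z) * P b) / φ (P b))
          = φ (P b * (x * z) * P b) := fun b => by
        rw [hPre]
        by_cases h0 : φ (P b) = 0
        · rw [h.mul_eq_zero (by rw [hPstar, hPP, h0]) (P b * (x * z))]; simp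
        · field_simp
      have hvz : v * z = z * v := hz v hvS
      have hodd : φ (x * z - v * (x * z) * v) = 0 := by
        have hd : x - v * x * v ∈ S := sub_mem hx (mul_mem (mul_mem hvS hx) hvS)
        have hdv : (x - v * x * v) * v = -(v * (x - v * x * v)) := by
          calc (x - v * x * v) * v = x * v - v * x * (v * v) := by noncomm_ring
            _ = v * v * x * v - v * x := by rw [hv, mul_one, one_mul]
            _ = _ := by noncomm_ring
        have e : x * z - v * (x * z) * v = (x - v * x * v) * z := by
          rw [sub_mul, show v * (x * z) * v = v * x * (z * v) by noncomm_ring, ← hvz]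
          noncomm_ring
        obtain ⟨p, hp, q, hq, hvq, rfl⟩ := hdec z hz
        have hdv' : (x - v * x * v) * v * v = -(v * ((x - v * x * v) * v)) := by
          conv_lhs => rw [hdv]
          rw [neg_mul, mul_assoc]
        rw [e, mul_add, ← mul_assoc, h.map_add, hprod _ hd p hp,
          hprod _ (mul_mem hd hvS) q hq, heven _ hd hdv, heven _ (mul_mem hd hvS) hdv']
        ring
      have h1 := hblocks (x * z)
      rw [hodd, mul_zero] at h1
      rw [Fintype.sum_bool, hterm, hterm]
      exact sub_eq_zero.1 h1

end Product

/-! ### The commutant of `A(I)` -/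

/-- If `B` commutes with a fermionic mode `(b, c)`, then in the algebra generated by `B` and the
mode, the commutant of the mode is contained in `B`: a general element is
`w + x b + y c + t c b` with coefficients in `B`, and the map `z ↦ b c z b c + c z b`, which fixes
the commutant of the mode, sends it to `w`. -/
lemma mem_of_commute_mode {A : Type*} [Ring A] [Algebra ℂ A] (B : Subalgebra ℂ A) {b c : A}
    (hbc : c * b + b * c = 1) (hb : b * b = 0) (hc : c * c = 0)
    (hBb : ∀ x ∈ B, b * x = x * b) (hBc : ∀ x ∈ B, c * x = x * c) {z : A}
    (hz : z ∈ Algebra.adjoin ℂ ((B : Set A) ∪ {b, c}))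
    (hzb : z * b = b * z) (hzc : z * c = c * z) : z ∈ B := by
  have hbcb : b * c * b = b := by
    calc b * c * b = b * (c * b + b * c) - b * b * c := by noncomm_ring
      _ = b := by rw [hbc, hb]; simp
  have hcbc : c * b * c = c := by
    calc c * b * c = (c * b + b * c) * c - b * (c * c) := by noncomm_ring
      _ = c := by rw [hbc, hc]; simp
  have hbc' : b * c = 1 - c * b := eq_sub_of_add_eq' hbc
  let M : Set A := {m | ∃ w ∈ B, ∃ x ∈ B, ∃ y ∈ B, ∃ t ∈ B,
    m = w + x * b + y * c + t * (c * b)}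
  have hM : z ∈ M := by
    suffices H : ∀ m ∈ M, z * m ∈ M by
      have := H 1 ⟨1, one_mem B, 0, zero_mem B, 0, zero_mem B, 0, zero_mem B, by simp⟩
      rwa [mul_one] at this
    have hleft : ∀ u ∈ B, ∀ m ∈ M, u * m ∈ M := by
      rintro u hu _ ⟨w, hw, x, hx, y, hy, t, ht, rfl⟩
      exact ⟨u * w, mul_mem hu hw, u * x, mul_mem hu hx, u * y, mul_mem hu hy,
        u * t, mul_mem hu ht, by noncomm_ring⟩
    clear hzb hzc
    induction hz using Algebra.adjoin_induction with
    | mem u hu =>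
      rcases hu with hu | rfl | rfl
      · exact hleft u hu
      · rintro _ ⟨w, hw, x, hx, y, hy, t, ht, rfl⟩
        refine ⟨y, hy, w + t, add_mem hw ht, 0, zero_mem B, -y, neg_mem hy, ?_⟩
        calc u * (w + x * u + y * c + t * (c * u))
            = u * w + u * x * u + u * y * c + u * t * (c * u) := by noncomm_ring
          _ = w * u + x * (u * u) + y * (u * c) + t * (u * c * u) := by
            rw [hBb w hw, hBb x hx, hBb y hy, hBb t ht]; noncomm_ring
          _ = _ := by rw [hb, hbcb, hbc']; noncomm_ring
      · rintro _ ⟨w, hw, x, hx, y, hy, t, ht, rfl⟩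
        refine ⟨0, zero_mem B, 0, zero_mem B, w, hw, x, hx, ?_⟩
        calc u * (w + x * b + y * u + t * (u * b))
            = u * w + u * x * b + u * y * u + u * t * (u * b) := by noncomm_ring
          _ = w * u + x * (u * b) + y * (u * u) + t * ((u * u) * b) := by
            rw [hBc w hw, hBc x hx, hBc y hy, hBc t ht]; noncomm_ring
          _ = _ := by rw [hc]; noncomm_ring
    | algebraMap r => exact hleft _ (B.algebraMap_mem r)
    | add z₁ z₂ _ _ h₁ h₂ =>
      intro m hm
      obtain ⟨w, hw, x, hx, y, hy, t, ht, e⟩ := h₁ m hm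
      obtain ⟨w', hw', x', hx', y', hy', t', ht', e'⟩ := h₂ m hm
      exact ⟨w + w', add_mem hw hw', x + x', add_mem hx hx', y + y', add_mem hy hy',
        t + t', add_mem ht ht', by rw [add_mul, e, e']; noncomm_ring⟩
    | mul z₁ z₂ _ _ h₁ h₂ =>
      intro m hm
      rw [mul_assoc]
      exact h₁ _ (h₂ m hm)
  obtain ⟨w, hw, x, hx, y, hy, t, ht, e⟩ := hM
  have h1 : z = b * c * z * (b * c) + c * z * b := by
    calc z = z * (c * b + b * c) := by rw [hbc, mul_one]
      _ = z * c * b + z * (b * c * b) * c := by rw [hbcb]; noncomm_ring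
      _ = z * c * b + z * b * (c * b * c) := by noncomm_ring
      _ = c * z * b + z * b * c := by rw [hcbc, hzc]
      _ = c * z * b + b * c * b * z * c := by rw [hzb, hbcb]
      _ = c * z * b + b * c * (b * z) * c := by noncomm_ring
      _ = _ := by rw [← hzb]; noncomm_ring
  have h2 : b * c * z * (b * c) + c * z * b = w := by
    calc b * c * z * (b * c) + c * z * b
        = b * (c * w) * b * c + b * (c * x) * b * b * c + b * (c * y) * c * b * c
          + b * (c * t) * c * b * b * c + c * w * b + c * x * b * b + c * y * c * b
          + c * t * c * b * b := by rw [e]; noncomm_ring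
      _ = b * w * c * b * c + b * x * c * (b * b) * c + b * y * (c * c) * b * c
          + b * t * (c * c) * b * b * c + w * c * b + x * c * (b * b) + y * (c * c) * b
          + t * (c * c) * b * b := by
        rw [hBc w hw, hBc x hx, hBc y hy, hBc t ht]; noncomm_ring
      _ = b * w * (c * b * c) + w * (c * b) := by rw [hb, hc]; noncomm_ring
      _ = w * (c * b + b * c) := by rw [hcbc, hBb w hw]; noncomm_ring
      _ = w := by rw [hbc, mul_one]
  rw [h1, h2]
  exact hw

/-- The creation and annihilation operators of the modes in `J`, each multiplied by `v`. -/
def twistedGenerators {A : Type*} [Ring A] [StarRing A] {ι : Type*} (a : ι → A) (v : A)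
    (J : Finset ι) : Set A :=
  {z | ∃ j ∈ J, z = v * a j ∨ z = v * star (a j)}

/-- An element anticommuting with `b` and `c` commutes with their commutator. -/
lemma mul_number_comm {A : Type*} [Ring A] {x b c : A} (hxb : x * b = -(b * x))
    (hxc : x * c = -(c * x)) :
    x * (b * c - c * b) = (b * c - c * b) * x := by
  calc x * (b * c - c * b) = x * b * c - x * c * b := by noncomm_ring
    _ = -(b * x) * c - -(c * x) * b := by rw [hxb, hxc]
    _ = -(b * (x * c)) + c * (x * b) := by noncomm_ring
    _ = _ := by rw [hxb, hxc]; noncomm_ring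

section CAR

variable {A : Type*} [Ring A] [StarRing A] {ι : Type*} [DecidableEq ι] {a : ι → A}

lemma IsCAR.anti (h : IsCAR a) {i j : ι} (hij : i ≠ j) :
    a i * a j = -(a j * a i) ∧ a i * star (a j) = -(star (a j) * a i) ∧
    star (a i) * a j = -(a j * star (a i)) ∧ star (a i) * star (a j) = -(star (a j) * star (a i))
    := by
  refine ⟨eq_neg_of_add_eq_zero_left (h.2.2 i j), ?_, ?_,
    eq_neg_of_add_eq_zero_left (h.2.1 i j)⟩
  · have := h.1 j i
    rw [if_neg hij.symm] at this
    exact eq_neg_of_add_eq_zero_right this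
  · have := h.1 i j
    rw [if_neg hij] at this
    exact eq_neg_of_add_eq_zero_left this

variable [Algebra ℂ A]

lemma IsCAR.sq (h : IsCAR a) (i : ι) : a i * a i = 0 := by
  have h1 := h.2.2 i i
  rw [← two_smul ℂ] at h1
  exact (smul_eq_zero.1 h1).resolve_left two_ne_zero

lemma IsCAR.star_sq (h : IsCAR a) (i : ι) : star (a i) * star (a i) = 0 := by
  rw [← star_mul, h.sq, star_zero]

variable [StarModule ℂ A]

/-- The parity `v` of the modes in `I`, together with the fact that the commutant of `A(I)` in
`A(I ∪ J)` is contained in the algebra generated by the twisted modes `v a_j`, `j ∈ J`. In the induction, the mode `k` is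
moved from `J` to `I` and then removed by `mem_of_commute_mode`. -/
lemma exists_parity (h : IsCAR a) (I : Finset ι) :
    ∃ v ∈ StarAlgebra.adjoin ℂ (a '' (I : Set ι)), star v = v ∧ v * v = 1 ∧
      (∀ i ∈ I, a i * v = -(v * a i)) ∧ (∀ i ∉ I, a i * v = v * a i) ∧
      ∀ J : Finset ι, Disjoint I J →
        ∀ z ∈ Algebra.adjoin ℂ (twistedGenerators a 1 (I ∪ J)),
          (∀ i ∈ I, z * a i = a i * z ∧ z * star (a i) = star (a i) * z) →
          z ∈ Algebra.adjoin ℂ (twistedGenerators a v J) := by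
  induction I using Finset.induction_on with
  | empty =>
    refine ⟨1, one_mem _, star_one A, one_mul 1, by simp, by simp, fun J _ z hz _ => ?_⟩
    simpa using hz
  | insert k I hk ih =>
    obtain ⟨v, hvI, hsv, hv, hanti, hcomm, hgen⟩ := ih
    set b := a k with hbdef
    set c := star (a k) with hcdef
    have hcb : c * b + b * c = 1 := by simpa using h.1 k k
    have hb : b * b = 0 := h.sq k
    have hc : c * c = 0 := h.star_sq k
    -- The parity of the single mode `k`.
    set u := b * c - c * b with hu
    have hvb : b * v = v * b := hcomm k hk
    have hstarcomm : ∀ i ∉ I, star (a i) * v = v * star (a i) := fun i hi => by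
      have := congrArg star (hcomm i hi)
      rw [star_mul, star_mul, hsv] at this
      exact this.symm
    have hvc : c * v = v * c := hstarcomm k hk
    have huv : u * v = v * u := by
      calc u * v = b * (c * v) - c * (b * v) := by rw [hu]; noncomm_ring
        _ = b * (v * c) - c * (v * b) := by rw [hvb, hvc]
        _ = b * v * c - c * v * b := by noncomm_ring
        _ = _ := by rw [hvb, hvc, hu]; noncomm_ring
    have hsu : star u = u := by simp [hu, hcdef, hbdef]
    have huu : u * u = 1 := by
      calc u * u = (c * b + b * c) * (c * b + b * c) - 2 * (b * (c * c) * b)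
            - 2 * (c * (b * b) * c) := by rw [hu]; noncomm_ring
        _ = 1 := by rw [hcb, hb, hc]; simp
    have hbu : b * u = -(u * b) := by
      calc b * u = b * b * c + (b * b) * c - b * c * b - c * (b * b)
            + c * (b * b) - (b * b) * c := by rw [hu]; noncomm_ring
        _ = -(b * c * b) := by rw [hb]; noncomm_ring
        _ = -(b * c * b - c * (b * b)) := by rw [hb]; noncomm_ring
        _ = _ := by rw [hu]; noncomm_ring
    have hju : ∀ j, j ≠ k → a j * u = u * a j := fun j hj =>
      mul_number_comm (h.anti hj).1 (h.anti hj).2.1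
    have hjsu : ∀ j, j ≠ k → star (a j) * u = u * star (a j) := fun j hj =>
      mul_number_comm (h.anti hj).2.2.1 (h.anti hj).2.2.2
    have hIle : StarAlgebra.adjoin ℂ (a '' (I : Set ι))
        ≤ StarAlgebra.adjoin ℂ (a '' ((insert k I : Finset ι) : Set ι)) :=
      StarAlgebra.adjoin_mono (Set.image_mono (by simp))
    have hbmem : b ∈ StarAlgebra.adjoin ℂ (a '' ((insert k I : Finset ι) : Set ι)) :=
      StarAlgebra.subset_adjoin ℂ _ ⟨k, by simp, rfl⟩
    have hcmem : c ∈ StarAlgebra.adjoin ℂ (a '' ((insert k I : Finset ι) : Set ι)) :=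
      star_mem hbmem
    refine ⟨v * u, mul_mem (hIle hvI) (sub_mem (mul_mem hbmem hcmem) (mul_mem hcmem hbmem)),
      by rw [star_mul, hsu, hsv, huv], ?_, ?_, ?_, ?_⟩
    · calc v * u * (v * u) = v * (u * v) * u := by noncomm_ring
        _ = (v * v) * (u * u) := by rw [huv]; noncomm_ring
        _ = 1 := by rw [hv, huu, one_mul]
    · intro i hi
      rcases Finset.mem_insert.1 hi with rfl | hi
      · rw [← mul_assoc, hvb, mul_assoc, hbu]; noncomm_ring
      · have hik : i ≠ k := fun e => hk (e ▸ hi)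
        rw [← mul_assoc, hanti i hi, neg_mul, mul_assoc, hju i hik, mul_assoc]
    · intro i hi
      have hik : i ≠ k := fun e => hi (by simp [e])
      have hiI : i ∉ I := fun e => hi (Finset.mem_insert_of_mem e)
      rw [← mul_assoc, hcomm i hiI, mul_assoc, hju i hik, mul_assoc]
    · intro J hJ z hz hzI
      have hkJ : k ∉ J := fun e => Finset.disjoint_left.1 hJ (Finset.mem_insert_self k I) e
      have hIJ : Disjoint I J :=
        Finset.disjoint_of_subset_left (Finset.subset_insert k I) hJ
      have hz1 : z ∈ Algebra.adjoin ℂ (twistedGenerators a v (insert k J)) := by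
        refine hgen (insert k J) (Finset.disjoint_insert_right.2 ⟨hk, hIJ⟩) z ?_
          fun i hi => hzI i (Finset.mem_insert_of_mem hi)
        rwa [Finset.union_insert, ← Finset.insert_union]
      -- `v` lies in `A(I)`, so `z` commutes with it and hence with the twisted mode `k`.
      have hzv : z * v = v * z := by
        have hzC : z ∈ StarSubalgebra.centralizer ℂ (a '' (I : Set ι)) := by
          rw [StarSubalgebra.mem_centralizer_iff]
          rintro _ ⟨i, hi, rfl⟩
          have := hzI i (Finset.mem_insert_of_mem hi)
          exact ⟨this.1.symm, this.2.symm⟩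
        have := StarAlgebra.adjoin_le_centralizer_centralizer ℂ (a '' (I : Set ι)) hvI
        exact ((StarSubalgebra.mem_centralizer_iff ℂ).1 this z hzC).1
      have hzk := hzI k (Finset.mem_insert_self k I)
      have hprod : ∀ x y : A, x * v = v * x → v * x * (v * y) = x * y := fun x y hx => by
        calc v * x * (v * y) = v * (x * v) * y := by noncomm_ring
          _ = v * v * x * y := by rw [hx]; noncomm_ring
          _ = x * y := by rw [hv, one_mul]
      -- A twisted generator `v u x` commutes with the twisted mode `k`.
      have hmode : ∀ x y : A, x * v = v * x → x * u = u * x → y * v = v * y →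
          y * u = -(u * y) → x * y = -(y * x) → v * y * (v * u * x) = v * u * x * (v * y) := by
        intro x y hxv hxu hyv hyu hxy
        have hy : y * x = -(x * y) := by rw [hxy, neg_neg]
        have huxv : u * x * v = v * (u * x) := by
          rw [mul_assoc, hxv, ← mul_assoc, huv, mul_assoc]
        rw [mul_assoc v u x, hprod y _ hyv, hprod (u * x) _ huxv, ← mul_assoc, hyu, neg_mul,
          mul_assoc, hy, mul_neg, neg_neg, mul_assoc]
      have hcu : c * u = -(u * c) := by
        have := congrArg star hbu
        rw [star_mul, star_neg, star_mul, hsu] at this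
        change u * c = -(c * u) at this
        rw [this, neg_neg]
      have hgens : ∀ y : A, y * v = v * y → y * u = -(u * y) →
          (∀ j ∈ J, a j * y = -(y * a j) ∧ star (a j) * y = -(y * star (a j))) →
          ∀ x ∈ Algebra.adjoin ℂ (twistedGenerators a (v * u) J), v * y * x = x * (v * y) := by
        intro y hyv hyu hyJ x hx
        induction hx using Algebra.adjoin_induction with
        | mem x hx =>
          obtain ⟨j, hj, hx⟩ := hx
          have hjk : j ≠ k := fun e => hkJ (e ▸ hj)
          have hjI : j ∉ I := fun e => Finset.disjoint_left.1 hIJ e hj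
          rcases hx with rfl | rfl
          · exact hmode _ y (hcomm j hjI) (hju j hjk) hyv hyu (hyJ j hj).1
          · exact hmode _ y (hstarcomm j hjI) (hjsu j hjk) hyv hyu (hyJ j hj).2
        | algebraMap r => exact (Algebra.commutes r _).symm
        | add x x' _ _ hx hx' => rw [mul_add, add_mul, hx, hx']
        | mul x x' _ _ hx hx' => rw [← mul_assoc, hx, mul_assoc, hx', mul_assoc]
      refine mem_of_commute_mode (b := v * b) (c := v * c)
        (Algebra.adjoin ℂ (twistedGenerators a (v * u) J)) ?_ ?_ ?_ ?_ ?_ ?_ ?_ ?_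
      · rw [hprod c b hvc, hprod b c hvb, hcb]
      · rw [hprod b b hvb, hb]
      · rw [hprod c c hvc, hc]
      · exact hgens b hvb hbu fun j hj =>
          have hjk : j ≠ k := fun e => hkJ (e ▸ hj)
          ⟨(h.anti hjk).1, (h.anti hjk).2.2.1⟩
      · exact hgens c hvc hcu fun j hj =>
          have hjk : j ≠ k := fun e => hkJ (e ▸ hj)
          ⟨(h.anti hjk).2.1, (h.anti hjk).2.2.2⟩
      · refine Algebra.adjoin_le ?_ hz1
        set D := Algebra.adjoin ℂ
          ((Algebra.adjoin ℂ (twistedGenerators a (v * u) J) : Set A) ∪ {v * b, v * c})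
        have hbD : v * b ∈ D := Algebra.subset_adjoin (by simp)
        have hcD : v * c ∈ D := Algebra.subset_adjoin (by simp)
        have huD : u ∈ D := by
          rw [hu, ← hprod b c hvb, ← hprod c b hvc]
          exact sub_mem (mul_mem hbD hcD) (mul_mem hcD hbD)
        have hred : ∀ x : A, v * x = u * (v * u * x) := fun x => by
          calc v * x = v * (u * u) * x := by rw [huu, mul_one]
            _ = v * u * u * x := by noncomm_ring
            _ = u * v * u * x := by rw [huv]
            _ = _ := by noncomm_ring
        have hJD : ∀ x ∈ twistedGenerators a (v * u) J, x ∈ D := fun x hx =>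
          Algebra.subset_adjoin (Or.inl (Algebra.subset_adjoin hx))
        rintro _ ⟨j, hj, hx⟩
        rcases Finset.mem_insert.1 hj with rfl | hj
        · rcases hx with rfl | rfl
          · exact hbD
          · exact hcD
        · rcases hx with rfl | rfl
          · rw [SetLike.mem_coe, hred]
            exact mul_mem huD (hJD _ ⟨j, hj, Or.inl rfl⟩)
          · rw [SetLike.mem_coe, hred]
            exact mul_mem huD (hJD _ ⟨j, hj, Or.inr rfl⟩)
      · rw [← mul_assoc, hzv, mul_assoc, hzk.1, mul_assoc]
      · rw [← mul_assoc, hzv, mul_assoc, hzk.2, mul_assoc]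

lemma mem_centralizer_adjoin {s : Set A} {z : A}
    (h : ∀ x ∈ s, x * z = z * x ∧ star x * z = z * star x) :
    z ∈ Set.centralizer (StarAlgebra.adjoin ℂ s : Set A) := by
  intro x hx
  have := StarAlgebra.adjoin_le_centralizer_centralizer ℂ s hx
  exact (((StarSubalgebra.mem_centralizer_iff ℂ).1 this z
    ((StarSubalgebra.mem_centralizer_iff ℂ).2 h)).1).symm

/-- The commutant `A(I)'` is contained in `A(J)₊ + v A(J)₋`; that `q` is odd is expressed by
`v * q` lying in the commutant. -/
lemma exists_even_odd (h : IsCAR a) {I J : Finset ι} (hIJ : Disjoint I J)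
    (hgen : StarAlgebra.adjoin ℂ (a '' ((I ∪ J : Finset ι) : Set ι)) = (⊤ : StarSubalgebra ℂ A)) :
    ∃ v ∈ StarAlgebra.adjoin ℂ (a '' (I : Set ι)), star v = v ∧ v * v = 1 ∧
      ∀ z ∈ Set.centralizer (StarAlgebra.adjoin ℂ (a '' (I : Set ι)) : Set A),
        ∃ p ∈ StarAlgebra.adjoin ℂ (a '' (J : Set ι)),
        ∃ q ∈ StarAlgebra.adjoin ℂ (a '' (J : Set ι)),
          v * q ∈ Set.centralizer (StarAlgebra.adjoin ℂ (a '' (I : Set ι)) : Set A) ∧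
          z = p + v * q := by
  obtain ⟨v, hvI, hsv, hv, hanti, hcomm, hcent⟩ := exists_parity h I
  refine ⟨v, hvI, hsv, hv, fun z hz => ?_⟩
  set S := StarAlgebra.adjoin ℂ (a '' (I : Set ι)) with hS
  set T := StarAlgebra.adjoin ℂ (a '' (J : Set ι)) with hT
  have hz1 : z ∈ Algebra.adjoin ℂ (twistedGenerators a v J) := by
    refine hcent J hIJ z ?_ fun i hi => ?_
    · have hztop : z ∈ (StarAlgebra.adjoin ℂ (a '' ((I ∪ J : Finset ι) : Set ι))).toSubalgebra := by
        rw [hgen]; trivial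
      rw [StarAlgebra.adjoin_toSubalgebra] at hztop
      refine Algebra.adjoin_mono ?_ hztop
      rintro x (⟨i, hi, rfl⟩ | hx)
      · exact ⟨i, hi, Or.inl (one_mul _).symm⟩
      · obtain ⟨i, hi, hix⟩ := hx
        exact ⟨i, hi, Or.inr (by rw [one_mul, hix, star_star])⟩
    · have hiS : a i ∈ S := StarAlgebra.subset_adjoin ℂ _ ⟨i, hi, rfl⟩
      exact ⟨(hz _ hiS).symm, (hz _ (star_mem hiS)).symm⟩
  let C := Subalgebra.centralizer ℂ (S : Set A)
  -- Carrying `p ∈ C` along the induction makes the decomposition multiplicative.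
  suffices H : ∃ p ∈ T, ∃ q ∈ T, p ∈ C ∧ v * q ∈ C ∧ z = p + v * q by
    obtain ⟨p, hp, q, hq, _, hvq, e⟩ := H
    exact ⟨p, hp, q, hq, hvq, e⟩
  clear hz
  induction hz1 using Algebra.adjoin_induction with
  | mem x hx =>
    have hv' : ∀ i ∈ I, star (a i) * v = -(v * star (a i)) := fun i hi => by
      have := congrArg star (hanti i hi)
      rw [star_mul, star_neg, star_mul, hsv] at this
      rw [this, neg_neg]
    have hC : ∀ y : A, (∀ i ∈ I, a i * y = -(y * a i) ∧ star (a i) * y = -(y * star (a i))) →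
        v * y ∈ C := by
      intro y hy
      refine mem_centralizer_adjoin ?_
      rintro _ ⟨i, hi, rfl⟩
      constructor
      · rw [← mul_assoc, hanti i hi, neg_mul, mul_assoc, (hy i hi).1, mul_neg, neg_neg, mul_assoc]
      · rw [← mul_assoc, hv' i hi, neg_mul, mul_assoc, (hy i hi).2, mul_neg, neg_neg, mul_assoc]
    obtain ⟨j, hj, hx⟩ := hx
    have hjT : a j ∈ T := StarAlgebra.subset_adjoin ℂ _ ⟨j, hj, rfl⟩
    have hne : ∀ i ∈ I, i ≠ j := fun i hi e => Finset.disjoint_left.1 hIJ hi (e ▸ hj)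
    rcases hx with rfl | rfl
    · exact ⟨0, zero_mem _, a j, hjT, zero_mem _,
        hC _ fun i hi => ⟨(h.anti (hne i hi)).1, (h.anti (hne i hi)).2.2.1⟩, by simp⟩
    · exact ⟨0, zero_mem _, star (a j), star_mem hjT, zero_mem _,
        hC _ fun i hi => ⟨(h.anti (hne i hi)).2.1, (h.anti (hne i hi)).2.2.2⟩, by simp⟩
  | algebraMap r =>
    exact ⟨_, T.algebraMap_mem r, 0, zero_mem _, C.algebraMap_mem r,
      by rw [mul_zero]; exact zero_mem _, by simp⟩
  | add x y _ _ hx hy =>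
    obtain ⟨p, hp, q, hq, hpC, hqC, rfl⟩ := hx
    obtain ⟨p', hp', q', hq', hpC', hqC', rfl⟩ := hy
    exact ⟨p + p', add_mem hp hp', q + q', add_mem hq hq', add_mem hpC hpC',
      by rw [mul_add]; exact add_mem hqC hqC', by noncomm_ring⟩
  | mul x y _ _ hx hy =>
    obtain ⟨p, hp, q, hq, hpC, hqC, rfl⟩ := hx
    obtain ⟨p', hp', q', hq', hpC', hqC', rfl⟩ := hy
    have hvp : v * p = p * v := hpC v hvI
    have hvq : v * (v * q) = v * q * v := hqC v hvI
    have hqq : v * q * (v * q') = q * q' := by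
      calc v * q * (v * q') = v * q * v * q' := by noncomm_ring
        _ = v * v * (q * q') := by rw [← hvq]; noncomm_ring
        _ = q * q' := by rw [hv, one_mul]
    have hpq : v * (p * q' + q * p') = p * (v * q') + v * q * p' := by
      calc v * (p * q' + q * p') = v * p * q' + v * q * p' := by noncomm_ring
        _ = _ := by rw [hvp]; noncomm_ring
    refine ⟨p * p' + q * q', add_mem (mul_mem hp hp') (mul_mem hq hq'),
      p * q' + q * p', add_mem (mul_mem hp hq') (mul_mem hq hp'),
      add_mem (mul_mem hpC hpC') ?_, ?_, ?_⟩
    · rw [← hqq]; exact mul_mem hqC hqC'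
    · rw [hpq]; exact add_mem (mul_mem hpC hqC') (mul_mem hqC hpC')
    · rw [hpq, ← hqq]; noncomm_ring

end CAR

/-- for disjoint finite `I`, `J`, any (not necessarily even) state that is
separable for the CAR pair `(A(I), A(J))` is also separable for the tensor product pair
`(A(I), A(I)')`, where `A(I)'` is the commutant of `A(I)` in `A(I ∪ J)`. -/
theorem car_separable_implies_tensor_separable
    {A : Type*} [Ring A] [StarRing A] [Algebra ℂ A] [StarModule ℂ A]
    {ι : Type*} [DecidableEq ι] (a : ι → A) (hCAR : IsCAR a)
    (Θ : A ≃⋆ₐ[ℂ] A) (hΘ : ∀ i, Θ (a i) = - a i)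
    (I J : Finset ι) (hdisj : Disjoint I J)
    (hgen : StarAlgebra.adjoin ℂ (a '' ((I ∪ J : Finset ι) : Set ι)) = (⊤ : StarSubalgebra ℂ A))
    (ω : A → ℂ) (hω : IsState ω)
    (hsep : IsSeparableState ω (StarAlgebra.adjoin ℂ (a '' (I : Set ι)) : Set A)
      (StarAlgebra.adjoin ℂ (a '' (J : Set ι)) : Set A)) :
    IsSeparableState ω (StarAlgebra.adjoin ℂ (a '' (I : Set ι)) : Set A)
      (Set.centralizer (StarAlgebra.adjoin ℂ (a '' (I : Set ι)) : Set A)) := by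
  obtain ⟨v, hvI, hsv, hv, hdec⟩ := exists_even_odd hCAR hdisj hgen
  obtain ⟨n, lam, φ, hlam, hsum, hφ, hprod, hωφ⟩ := hsep
  choose q ψ hq0 hq1 hψ hφψ using fun i =>
    product_state_decomposition (hφ i) hvI hsv hv hdec (hprod i)
  -- On `A(I) A(I)'` the state `ω` is still the same mixture of the `φ i`.
  have hωz : ∀ x ∈ (StarAlgebra.adjoin ℂ (a '' (I : Set ι)) : Set A),
      ∀ z ∈ Set.centralizer (StarAlgebra.adjoin ℂ (a '' (I : Set ι)) : Set A),
      ω (x * z) = ∑ i, (lam i : ℂ) * φ i (x * z) := by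
    intro x hx z hz
    obtain ⟨p, hp, r, hr, -, rfl⟩ := hdec z hz
    rw [mul_add, ← mul_assoc, hω.map_add, hωφ x hx p hp, hωφ _ (mul_mem hx hvI) r hr,
      ← Finset.sum_add_distrib]
    exact Finset.sum_congr rfl fun i _ => by rw [(hφ i).map_add, mul_add]
  refine isSeparableState_of_fintype (κ := Fin n × Bool) (fun k => lam k.1 * q k.1 k.2)
    (fun k => ψ k.1 k.2) (fun k => mul_nonneg (hlam _).le (hq0 _ _)) ?_ ?_ ?_
  · rw [Fintype.sum_prod_type]
    simp only [← Finset.mul_sum, hq1, mul_one, hsum]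
  · intro k hk
    exact hψ k.1 k.2 (pos_of_mul_pos_right hk (hlam _).le)
  · intro x hx z hz
    rw [hωz x hx z hz, Fintype.sum_prod_type]
    refine Finset.sum_congr rfl fun i _ => ?_
    rw [hφψ i x hx z hz, Finset.mul_sum]
    exact Finset.sum_congr rfl fun b _ => by push_cast; ring
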